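/- Let d ≥ 1, 2 < p ≤ ∞, 0 < γ < 2d(1/2 − 1/p) and a ≥ 0. Set ‖u‖_X = max(‖u‖_{L²}, ‖u‖_{L̂^p}). There is a constant C depending only on d, γ and p (independent of a) such that for all Schwartz functions f₁, f₂, f₃ on ℝ^d, ‖H_{a,γ}(f₁, f₂, f₃)‖_X ≤ C ‖f₁‖_X ‖f₂‖_X ‖f₃‖_X. -/

import Mathlib

open MeasureTheory Real FourierTransform
open scoped ENNReal

/-- The Hartree trilinear operator
`H_{a,γ}(f,g,h)(x) = ((e^{-a|·|} |·|^{-γ}) ∗ (f ḡ))(x) · h(x)` on `ℝ^d`. -/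
noncomputable def hartreeOp (d : ℕ) (a γ : ℝ)
    (f g h : EuclideanSpace ℝ (Fin d) → ℂ) : EuclideanSpace ℝ (Fin d) → ℂ :=
  fun x =>
    (∫ y : EuclideanSpace ℝ (Fin d),
      ((Real.exp (-(a * ‖y‖)) * ‖y‖ ^ (-γ) : ℝ) : ℂ) *
        (f (x - y) * (starRingEnd ℂ) (g (x - y)))) * h x

/-- The `X = L² ∩ L̂^p` norm `‖u‖_X = max(‖u‖_{L²}, ‖𝓕u‖_{L^{p'}})`. -/
noncomputable def Xnorm (d : ℕ) (p' : ℝ≥0∞)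
    (u : EuclideanSpace ℝ (Fin d) → ℂ) : ℝ≥0∞ :=
  max (eLpNorm u 2 volume) (eLpNorm (𝓕 u) p' volume)

/-!
The kernel `e^{-a|y|} |y|^{-γ}` is a mixture of Gaussians `e^{-t|y|²}`: `|y|^{-γ}` is the Laplace
transform in `|y|²` of a multiple of `t^{γ/2-1} dt`, and `e^{-a|y|}` that of the law of
`a² / (2Z²)` with `Z` a standard normal variable. The second measure is a probability measure on
`[0, ∞)`, so convolving with it only shifts mass to the right, and the Fourier transform of the
kernel is nonnegative and at most `C |ξ|^{γ-d}` with `C` independent of `a`.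

It remains to bound `∫ |ξ|^{γ-d} |𝓕(f ḡ)(ξ)| dξ`. Near the origin the weight is integrable and
`|𝓕(f ḡ)| ≤ ‖f‖₂ ‖g‖₂`; away from it Young's inequality for `𝓕(f ḡ)`, a correlation of `𝓕 f` and
`𝓕 g`, pairs `‖𝓕 f‖_{p'} ‖𝓕 g‖_{p'}` with a weight that is integrable to the required power because
`γ < d (2/p' - 1)`. Finally, multiplying `h` by a function whose Fourier transform is integrable is
bounded on `L²`, and on `L̂^p` by Young's inequality `L¹ ∗ L^{p'} ⊆ L^{p'}`.
-/

namespace HartreeEstimate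
open Set ProbabilityTheory
open scoped NNReal

section CauchySchlomilch

variable {c : ℝ}

lemma hasDerivAt_sub_div {x : ℝ} (hx : x ≠ 0) :
    HasDerivAt (fun x ↦ x - c / x) (1 + c / x ^ 2) x := by
  convert! (hasDerivAt_id x).sub ((hasDerivAt_inv hx).const_mul c) using 1
  ring

lemma monotoneOn_sub_div (hc : 0 ≤ c) : MonotoneOn (fun x ↦ x - c / x) (Ioi 0) := by
  rintro x (hx : 0 < x) y - hxy
  simp only
  gcongr

lemma image_sub_div (hc : 0 < c) : (fun x ↦ x - c / x) '' Ioi 0 = univ := by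
  refine eq_univ_of_forall fun w ↦ ?_
  have hroot : √(w ^ 2 + 4 * c) ^ 2 = w ^ 2 + 4 * c := sq_sqrt (by positivity)
  have hlt : |w| < √(w ^ 2 + 4 * c) := lt_sqrt_of_sq_lt (by rw [sq_abs]; linarith)
  have hpos : 0 < w + √(w ^ 2 + 4 * c) := by linarith [neg_abs_le w]
  refine ⟨(w + √(w ^ 2 + 4 * c)) / 2, half_pos hpos, ?_⟩
  have hne := hpos.ne'
  simp only
  field_simp
  linear_combination hroot

lemma setLIntegral_Iio_sub_div (hc : 0 < c) (f : ℝ → ℝ≥0∞) :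
    ∫⁻ x in Iio 0, f (x - c / x) =
      ∫⁻ x in Ioi 0, ENNReal.ofReal (c / x ^ 2) * f (x - c / x) := by
  have hderiv : ∀ x ∈ Ioi (0 : ℝ),
      HasDerivWithinAt (fun x ↦ -c / x) (c / x ^ 2) (Ioi 0) x := fun x hx ↦ by
    convert! ((hasDerivAt_inv (ne_of_gt hx)).const_mul (-c)).hasDerivWithinAt using 1
    ring
  have hmono : MonotoneOn (fun x ↦ -c / x) (Ioi 0) := by
    rintro x (hx : 0 < x) y - hxy
    simp only [neg_div]
    gcongr
  have himage : (fun x ↦ -c / x) '' Ioi 0 = Iio 0 := by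
    refine Subset.antisymm
      (image_subset_iff.2 fun x hx ↦ div_neg_of_neg_of_pos (neg_neg_of_pos hc) hx) fun y hy ↦
      ⟨-c / y, div_pos_of_neg_of_neg (neg_neg_of_pos hc) hy, div_div_cancel₀ (neg_ne_zero.2 hc.ne')⟩
  rw [← himage, lintegral_image_eq_lintegral_deriv_mul_of_monotoneOn measurableSet_Ioi hderiv hmono]
  refine setLIntegral_congr_fun measurableSet_Ioi fun x (hx : 0 < x) ↦ ?_
  rw [show -c / x - c / (-c / x) = x - c / x by field_simp; ring]

lemma lintegral_sub_div (hc : 0 < c) {f : ℝ → ℝ≥0∞} (hf : Measurable f) :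
    ∫⁻ x, f (x - c / x) = ∫⁻ x, f x := by
  have hmeas : Measurable fun x ↦ f (x - c / x) := by fun_prop
  calc ∫⁻ x, f (x - c / x)
      = (∫⁻ x in Iio 0, f (x - c / x)) + ∫⁻ x in Ioi 0, f (x - c / x) := by
        rw [← lintegral_add_compl _ measurableSet_Iio, compl_Iio,
          setLIntegral_congr Ioi_ae_eq_Ici.symm]
    _ = ∫⁻ x in Ioi 0, ENNReal.ofReal (1 + c / x ^ 2) * f (x - c / x) := by
        rw [setLIntegral_Iio_sub_div hc, ← lintegral_add_right _ hmeas]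
        refine setLIntegral_congr_fun measurableSet_Ioi fun x _ ↦ ?_
        rw [add_comm 1, ENNReal.ofReal_add (by positivity) zero_le_one, ENNReal.ofReal_one,
          add_mul, one_mul]
    _ = ∫⁻ x, f x := by
        rw [← lintegral_image_eq_lintegral_deriv_mul_of_monotoneOn measurableSet_Ioi
          (fun x hx ↦ (hasDerivAt_sub_div (ne_of_gt hx)).hasDerivWithinAt)
          (monotoneOn_sub_div hc.le) f, image_sub_div hc, Measure.restrict_univ]

end CauchySchlomilch

section LaplaceTransform

/-- The Laplace transform `r ↦ ∫ e^{-tr} dμ(t)` of a measure on `ℝ`, with values in `[0, ∞]` so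
that no integrability is presupposed. -/
noncomputable def laplace (μ : Measure ℝ) (r : ℝ) : ℝ≥0∞ :=
  ∫⁻ t, ENNReal.ofReal (rexp (-(t * r))) ∂μ

lemma laplace_conv (μ ν : Measure ℝ) [SFinite μ] [SFinite ν] (r : ℝ) :
    laplace (μ.conv ν) r = laplace μ r * laplace ν r := by
  have hmul (s t : ℝ) : ENNReal.ofReal (rexp (-((s + t) * r))) =
      ENNReal.ofReal (rexp (-(s * r))) * ENNReal.ofReal (rexp (-(t * r))) := by
    rw [← ENNReal.ofReal_mul (exp_nonneg _), ← exp_add]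
    ring_nf
  simp only [laplace]
  rw [Measure.lintegral_conv (by fun_prop)]
  simp_rw [hmul]
  rw [lintegral_lintegral_mul (by fun_prop) (by fun_prop)]

/-- The law of `a² / (2 Z²)` for a standard Gaussian `Z`: the one-sided `1/2`-stable law, which
subordinates `e^{-ar}` to the functions `e^{-tr²}` (`laplace_levyMeasure`). -/
noncomputable def levyMeasure (a : ℝ) : Measure ℝ :=
  (gaussianReal 0 1).map fun z ↦ a ^ 2 / (2 * z ^ 2)

instance (a : ℝ) : IsProbabilityMeasure (levyMeasure a) :=
  Measure.isProbabilityMeasure_map (by fun_prop)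

lemma ae_nonneg_levyMeasure (a : ℝ) : ∀ᵐ t ∂levyMeasure a, 0 ≤ t :=
  (ae_map_iff (by fun_prop) measurableSet_Ici).2 (.of_forall fun z ↦ by positivity)

lemma lintegral_exp_neg_div_sq_gaussianReal {c : ℝ} (hc : 0 ≤ c) :
    ∫⁻ z, ENNReal.ofReal (rexp (-(c ^ 2 / (2 * z ^ 2)))) ∂gaussianReal 0 1 =
      ENNReal.ofReal (rexp (-c)) := by
  rcases hc.eq_or_lt with rfl | hc
  · simp
  have hpdf (z : ℝ) (hz : z ≠ 0) :
      gaussianPDF 0 1 z * ENNReal.ofReal (rexp (-(c ^ 2 / (2 * z ^ 2)))) =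
        ENNReal.ofReal (rexp (-c)) * gaussianPDF 0 1 (z - c / z) := by
    rw [gaussianPDF, gaussianPDF, ← ENNReal.ofReal_mul (gaussianPDFReal_nonneg _ _ _),
      ← ENNReal.ofReal_mul (exp_nonneg _)]
    simp only [gaussianPDFReal, NNReal.coe_one]
    rw [mul_assoc, ← exp_add, mul_left_comm, ← exp_add]
    congr 3
    field_simp
    ring
  rw [gaussianReal_of_var_ne_zero 0 one_ne_zero,
    lintegral_withDensity_eq_lintegral_mul _ (measurable_gaussianPDF 0 1) (by fun_prop)]
  calc ∫⁻ z, gaussianPDF 0 1 z * ENNReal.ofReal (rexp (-(c ^ 2 / (2 * z ^ 2))))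
      = ∫⁻ z, ENNReal.ofReal (rexp (-c)) * gaussianPDF 0 1 (z - c / z) :=
        lintegral_congr_ae ((Measure.ae_ne volume 0).mono hpdf)
    _ = ENNReal.ofReal (rexp (-c)) := by
        rw [lintegral_const_mul' _ _ ENNReal.ofReal_ne_top,
          lintegral_sub_div hc (measurable_gaussianPDF 0 1),
          lintegral_gaussianPDF_eq_one 0 one_ne_zero, mul_one]

lemma laplace_levyMeasure {a r : ℝ} (ha : 0 ≤ a) (hr : 0 ≤ r) :
    laplace (levyMeasure a) (r ^ 2) = ENNReal.ofReal (rexp (-(a * r))) := by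
  rw [laplace, levyMeasure, lintegral_map (by fun_prop) (by fun_prop),
    ← lintegral_exp_neg_div_sq_gaussianReal (mul_nonneg ha hr)]
  simp_rw [mul_pow, mul_div_right_comm]

/-- The Riesz measure `Γ(s)⁻¹ t^{s-1} dt` on `(0, ∞)`, with Laplace transform
`r ↦ r^{-s}`. -/
noncomputable def rieszMeasure (s : ℝ) : Measure ℝ :=
  (volume.restrict (Ioi 0)).withDensity fun t ↦ ENNReal.ofReal (t ^ (s - 1) / Gamma s)

instance (s : ℝ) : SFinite (rieszMeasure s) := by
  unfold rieszMeasure; infer_instance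

lemma ae_pos_rieszMeasure (s : ℝ) : ∀ᵐ t ∂rieszMeasure s, 0 < t :=
  (withDensity_absolutelyContinuous _ _).ae_le (ae_restrict_mem measurableSet_Ioi)

lemma lintegral_rieszMeasure (s : ℝ) {f : ℝ → ℝ≥0∞} (hf : Measurable f) :
    ∫⁻ t, f t ∂rieszMeasure s = ∫⁻ t in Ioi 0, ENNReal.ofReal (t ^ (s - 1) / Gamma s) * f t :=
  lintegral_withDensity_eq_lintegral_mul _ (by fun_prop) hf

lemma laplace_rieszMeasure {s r : ℝ} (hs : 0 < s) (hr : 0 < r) :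
    laplace (rieszMeasure s) r = ENNReal.ofReal (r ^ (-s)) := by
  have := Gamma_pos_of_pos hs
  rw [laplace, lintegral_rieszMeasure s (by fun_prop), ← mul_one (ENNReal.ofReal (r ^ (-s))),
    ← lintegral_gammaPDF_eq_one hs hr, ← lintegral_const_mul' _ _ ENNReal.ofReal_ne_top,
    ← lintegral_indicator measurableSet_Ioi]
  refine lintegral_congr_ae ((Measure.ae_ne volume 0).mono fun t ht ↦ ?_)
  rcases ht.lt_or_gt with ht | ht
  · simp [gammaPDF_of_neg ht, ht.le]
  have hrs : r ^ (-s) * r ^ s = 1 := by rw [← rpow_add hr, neg_add_cancel, rpow_zero]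
  simp only [indicator_of_mem (mem_Ioi.2 ht)]
  rw [gammaPDF_of_nonneg ht.le, ← ENNReal.ofReal_mul (by positivity),
    ← ENNReal.ofReal_mul (by positivity), mul_comm t r]
  congr 1
  linear_combination (-(t ^ (s - 1) / Gamma s * rexp (-(r * t)))) * hrs

lemma lintegral_rpow_neg_mul_rieszMeasure {s σ : ℝ} (hs : s < σ) {f : ℝ → ℝ≥0∞}
    (hf : Measurable f) :
    ∫⁻ u, ENNReal.ofReal (u ^ (-s)) * f u ∂rieszMeasure σ =
      ENNReal.ofReal (Gamma (σ - s) / Gamma σ) * ∫⁻ u, f u ∂rieszMeasure (σ - s) := by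
  have hΓ := Gamma_pos_of_pos (sub_pos.2 hs)
  rw [lintegral_rieszMeasure σ (by fun_prop), lintegral_rieszMeasure (σ - s) hf,
    ← lintegral_const_mul' _ _ ENNReal.ofReal_ne_top]
  refine setLIntegral_congr_fun measurableSet_Ioi fun u (hu : 0 < u) ↦ ?_
  simp only [← mul_assoc]
  rw [← ENNReal.ofReal_mul' (by positivity), ← ENNReal.ofReal_mul' (by positivity),
    show σ - s - 1 = σ - 1 + -s by ring, rpow_add hu]
  congr 2
  field_simp

lemma lintegral_rpow_neg_add_rieszMeasure {s σ r : ℝ} (hs : 0 < s) (hσ : s < σ) (hr : 0 < r) :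
    ∫⁻ t, ENNReal.ofReal ((t + r) ^ (-σ)) ∂rieszMeasure s =
      ENNReal.ofReal (Gamma (σ - s) / Gamma σ * r ^ (s - σ)) := by
  calc ∫⁻ t, ENNReal.ofReal ((t + r) ^ (-σ)) ∂rieszMeasure s
      = ∫⁻ t, ∫⁻ u, ENNReal.ofReal (rexp (-(u * (t + r)))) ∂rieszMeasure σ ∂rieszMeasure s :=
        lintegral_congr_ae ((ae_pos_rieszMeasure s).mono fun t ht ↦
          (laplace_rieszMeasure (hs.trans hσ) (add_pos ht hr)).symm)
    _ = ∫⁻ u, laplace (rieszMeasure s) u * ENNReal.ofReal (rexp (-(u * r))) ∂rieszMeasure σ := by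
        rw [lintegral_lintegral_swap (by fun_prop)]
        refine lintegral_congr fun u ↦ ?_
        rw [laplace, ← lintegral_mul_const _ (by fun_prop)]
        refine lintegral_congr fun t ↦ ?_
        rw [← ENNReal.ofReal_mul (exp_nonneg _), ← exp_add]
        ring_nf
    _ = ∫⁻ u, ENNReal.ofReal (u ^ (-s)) * ENNReal.ofReal (rexp (-(u * r))) ∂rieszMeasure σ :=
        lintegral_congr_ae ((ae_pos_rieszMeasure σ).mono fun u hu ↦ by
          simp only [laplace_rieszMeasure hs hu])
    _ = ENNReal.ofReal (Gamma (σ - s) / Gamma σ) * laplace (rieszMeasure (σ - s)) r :=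
        lintegral_rpow_neg_mul_rieszMeasure hσ (by fun_prop)
    _ = ENNReal.ofReal (Gamma (σ - s) / Gamma σ * r ^ (s - σ)) := by
        rw [laplace_rieszMeasure (sub_pos.2 hσ) hr, neg_sub,
          ENNReal.ofReal_mul' (rpow_nonneg hr.le _)]

end LaplaceTransform

section YukawaMeasure

/-- The measure on `(0, ∞)` mixing the Gaussians `e^{-t|y|²}` into the Yukawa-type kernel
`e^{-a|y|} |y|^{-γ}` (`laplace_yukawaMeasure`). -/
noncomputable def yukawaMeasure (a γ : ℝ) : Measure ℝ :=
  (rieszMeasure (γ / 2)).conv (levyMeasure a)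

instance (a γ : ℝ) : SFinite (yukawaMeasure a γ) := by
  unfold yukawaMeasure; infer_instance

lemma laplace_yukawaMeasure {a γ r : ℝ} (ha : 0 ≤ a) (hγ : 0 < γ) (hr : 0 < r) :
    laplace (yukawaMeasure a γ) (r ^ 2) = ENNReal.ofReal (rexp (-(a * r)) * r ^ (-γ)) := by
  rw [yukawaMeasure, laplace_conv, laplace_rieszMeasure (half_pos hγ) (pow_pos hr 2),
    laplace_levyMeasure ha hr.le, ENNReal.ofReal_mul (exp_nonneg _), mul_comm, ← rpow_natCast,
    ← rpow_mul hr.le]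
  congr 3
  push_cast
  ring

lemma lintegral_yukawaMeasure_le (a γ : ℝ) {f g : ℝ → ℝ≥0∞} (hf : Measurable f)
    (hfg : ∀ ⦃t⦄, 0 < t → ∀ ⦃b⦄, t ≤ b → f b ≤ g t) :
    ∫⁻ b, f b ∂yukawaMeasure a γ ≤ ∫⁻ t, g t ∂rieszMeasure (γ / 2) := by
  rw [yukawaMeasure, Measure.lintegral_conv hf]
  refine lintegral_mono_ae ((ae_pos_rieszMeasure _).mono fun t ht ↦ ?_)
  calc ∫⁻ u, f (t + u) ∂levyMeasure a
      ≤ ∫⁻ _, g t ∂levyMeasure a :=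
        lintegral_mono_ae ((ae_nonneg_levyMeasure a).mono fun u hu ↦
          hfg ht (le_add_of_nonneg_right hu))
    _ = g t := by simp

lemma ae_pos_yukawaMeasure (a γ : ℝ) : ∀ᵐ t ∂yukawaMeasure a γ, 0 < t := by
  suffices h : yukawaMeasure a γ (Iic 0) = 0 from
    (measure_eq_zero_iff_ae_notMem.1 h).mono fun t ht ↦ not_le.1 ht
  rw [← lintegral_indicator_one measurableSet_Iic, ← nonpos_iff_eq_zero]
  refine (lintegral_yukawaMeasure_le (g := 0) a γ (by measurability) fun t ht b htb ↦ ?_).trans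
    lintegral_zero.le
  simp [ht.trans_le htb]

end YukawaMeasure

section GaussianFourier

variable {V : Type*} [NormedAddCommGroup V] [InnerProductSpace ℝ V]

/-- The Fourier transform of `y ↦ e^{-b|y|²}` (`fourier_exp_neg_mul_sq_norm`), as a real-valued
function. -/
noncomputable def gaussianHat (b : ℝ) (ξ : V) : ℝ :=
  (π / b) ^ (Module.finrank ℝ V / 2 : ℝ) * rexp (-(π ^ 2 * ‖ξ‖ ^ 2 / b))

lemma one_add_rpow_le {σ x : ℝ} (hσ : 0 < σ) (hx : 0 ≤ x) :
    (1 + x) ^ σ ≤ σ ^ σ * rexp (1 - σ) * rexp x := by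
  have hle : (1 + x) / σ ≤ rexp ((1 + x) / σ - 1) := by
    linarith [add_one_le_exp ((1 + x) / σ - 1)]
  calc (1 + x) ^ σ = σ ^ σ * ((1 + x) / σ) ^ σ := by
        rw [← mul_rpow hσ.le (by positivity), mul_div_cancel₀ _ hσ.ne']
    _ ≤ σ ^ σ * rexp ((1 + x) / σ - 1) ^ σ := by gcongr
    _ = σ ^ σ * rexp (1 - σ) * rexp x := by
        rw [← exp_mul, mul_assoc, ← exp_add]
        congr 2
        field_simp
        ring

lemma exists_gaussianHat_le (V : Type*) [NormedAddCommGroup V] [InnerProductSpace ℝ V]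
    [FiniteDimensional ℝ V] [Nontrivial V] :
    ∃ C : ℝ≥0, ∀ ⦃t⦄, 0 < t → ∀ ⦃b⦄, t ≤ b → ∀ ξ : V,
      gaussianHat b ξ ≤ C * (t + π ^ 2 * ‖ξ‖ ^ 2) ^ (-(Module.finrank ℝ V / 2 : ℝ)) := by
  have hσ : (0 : ℝ) < Module.finrank ℝ V / 2 := by
    have := Module.finrank_pos (R := ℝ) (M := V)
    positivity
  simp only [gaussianHat]
  set σ : ℝ := (Module.finrank ℝ V / 2 : ℝ)
  refine ⟨⟨(π * σ) ^ σ * rexp (1 - σ), by positivity⟩, fun t ht b htb ξ ↦ ?_⟩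
  have hb := ht.trans_le htb
  set R := π ^ 2 * ‖ξ‖ ^ 2
  have hR : 0 ≤ R := by positivity
  have hsum : 0 < b + R := by positivity
  calc (π / b) ^ σ * rexp (-(R / b))
      = π ^ σ * (b + R) ^ (-σ) * ((1 + R / b) ^ σ * rexp (-(R / b))) := by
        have hsplit : 1 + R / b = (b + R) / b := by field_simp
        rw [hsplit, div_rpow pi_nonneg hb.le, div_rpow hsum.le hb.le, rpow_neg hsum.le]
        field_simp
    _ ≤ π ^ σ * (t + R) ^ (-σ) * (σ ^ σ * rexp (1 - σ) * rexp (R / b) * rexp (-(R / b))) := by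
        gcongr ?_ * ?_ * (?_ * _)
        · exact rpow_le_rpow_of_nonpos (by positivity) (by gcongr) (by linarith)
        · exact one_add_rpow_le hσ (by positivity)
    _ = (π * σ) ^ σ * rexp (1 - σ) * (t + R) ^ (-σ) := by
        rw [mul_assoc _ (rexp (R / b)), ← exp_add, add_neg_cancel, exp_zero, mul_one,
          mul_rpow pi_nonneg hσ.le]
        ring

/-- The Fourier transform of the Yukawa-type kernel `e^{-a|y|} |y|^{-γ}`
(`integral_yukawa_mul_comp_sub`), as an extended nonnegative function. -/
noncomputable def yukawaHat (a γ : ℝ) (ξ : V) : ℝ≥0∞ :=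
  ∫⁻ b, ENNReal.ofReal (gaussianHat b ξ) ∂yukawaMeasure a γ

lemma enorm_yukawaHat_mul_le (a γ : ℝ) (ξ : V) (z : ℂ) :
    ‖((yukawaHat a γ ξ).toReal : ℂ) * z‖ₑ ≤ yukawaHat a γ ξ * ‖z‖ₑ := by
  rw [enorm_mul, ← ofReal_norm (_ : ℂ), Complex.norm_of_nonneg ENNReal.toReal_nonneg]
  gcongr
  exact ENNReal.ofReal_toReal_le

lemma exists_yukawaHat_le (V : Type*) [NormedAddCommGroup V]
    [InnerProductSpace ℝ V] [FiniteDimensional ℝ V] {γ : ℝ} (hγ : 0 < γ)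
    (hγV : γ < Module.finrank ℝ V) :
    ∃ C : ℝ≥0, ∀ (a : ℝ) (ξ : V), ξ ≠ 0 →
      yukawaHat a γ ξ ≤ C * ENNReal.ofReal (‖ξ‖ ^ (γ - Module.finrank ℝ V)) := by
  have : Nontrivial V := Module.finrank_pos_iff.1 (Nat.cast_pos.1 (hγ.trans hγV))
  obtain ⟨C, hC⟩ := exists_gaussianHat_le V
  set n : ℝ := (Module.finrank ℝ V : ℝ)
  set D : ℝ := Gamma (n / 2 - γ / 2) / Gamma (n / 2) * π ^ (γ - n) with hD
  refine ⟨C * D.toNNReal, fun a ξ hξ ↦ ?_⟩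
  have := norm_pos_iff.2 hξ
  calc yukawaHat a γ ξ
      ≤ ∫⁻ t, ENNReal.ofReal (C * (t + π ^ 2 * ‖ξ‖ ^ 2) ^ (-(n / 2))) ∂rieszMeasure (γ / 2) :=
        lintegral_yukawaMeasure_le a γ (by unfold gaussianHat; fun_prop) fun t ht b htb ↦
          ENNReal.ofReal_le_ofReal (hC ht htb ξ)
    _ = C * ENNReal.ofReal (D * ‖ξ‖ ^ (γ - n)) := by
        simp_rw [ENNReal.ofReal_mul C.coe_nonneg, ENNReal.ofReal_coe_nnreal]
        rw [lintegral_const_mul' _ _ ENNReal.coe_ne_top,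
          lintegral_rpow_neg_add_rieszMeasure (half_pos hγ) (by linarith) (by positivity), hD,
          ← mul_pow, ← rpow_natCast, ← rpow_mul (by positivity),
          mul_rpow pi_nonneg (norm_nonneg ξ), ← mul_assoc]
        congr 4 <;> push_cast <;> ring_nf
    _ = ↑(C * D.toNNReal) * ENNReal.ofReal (‖ξ‖ ^ (γ - n)) := by
        rw [ENNReal.ofReal_mul' (by positivity), ← mul_assoc, ENNReal.coe_mul, ENNReal.ofReal]

variable [MeasurableSpace V] [BorelSpace V]

lemma measurable_yukawaHat (a γ : ℝ) : Measurable (yukawaHat a γ : V → ℝ≥0∞) := by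
  unfold yukawaHat gaussianHat
  fun_prop

variable [FiniteDimensional ℝ V]

lemma integrable_exp_neg_mul_sq_norm {b : ℝ} (hb : 0 < b) :
    Integrable fun y : V ↦ ((rexp (-(b * ‖y‖ ^ 2)) : ℝ) : ℂ) := by
  simpa using GaussianFourier.integrable_cexp_neg_mul_sq_norm_add (V := V) (b := b) (by simpa) 0 0

lemma fourier_exp_neg_mul_sq_norm {b : ℝ} (hb : 0 < b) (ξ : V) :
    𝓕 (fun y : V ↦ ((rexp (-(b * ‖y‖ ^ 2)) : ℝ) : ℂ)) ξ = gaussianHat b ξ := by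
  have h := fourier_gaussian_innerProductSpace (V := V) (b := b) (by simpa) ξ
  simp only [gaussianHat]
  push_cast [Complex.ofReal_cpow (div_nonneg pi_nonneg hb.le)]
  simpa [neg_div] using h

end GaussianFourier

section FourierTransform

variable {V : Type*} [NormedAddCommGroup V] [InnerProductSpace ℝ V] [FiniteDimensional ℝ V]
  [MeasurableSpace V] [BorelSpace V] {f g : V → ℂ}

lemma fourier_fourierChar_smul (f : V → ℂ) (x ξ : V) :
    𝓕 (fun y ↦ 𝐞 (inner ℝ y x) • f y) ξ = 𝓕 f (ξ - x) := by
  simp_rw [Real.fourier_eq, smul_smul, ← AddChar.map_add_eq_mul, inner_sub_right, neg_sub,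
    sub_eq_neg_add]

lemma integral_mul_fourier_eq (hf : Integrable f) (hg : Integrable g) :
    ∫ x, f x * 𝓕 g x = ∫ ξ, 𝓕 f ξ * g ξ := by
  simpa using! (VectorFourier.integral_fourierIntegral_smul_eq_flip (L := innerₗ V)
    continuous_fourierChar continuous_inner hf hg).symm

lemma integral_mul_fourierInv_eq (hf : Integrable f) (hg : Integrable g) :
    ∫ x, f x * 𝓕⁻ g x = ∫ ξ, 𝓕⁻ f ξ * g ξ := by
  calc ∫ x, f x * 𝓕⁻ g x = ∫ ξ, 𝓕 f ξ * g (-ξ) := by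
        rw [fourierInv_eq_fourier_comp_neg, integral_mul_fourier_eq hf hg.comp_neg]
    _ = ∫ ξ, 𝓕⁻ f ξ * g ξ := by
        rw [← integral_neg_eq_self]
        simp only [neg_neg, fourierInv_eq_fourier_neg]

lemma fourier_fourierInv_mul (hf : Integrable f) (hg : Integrable g) (ξ : V) :
    𝓕 (fun x ↦ 𝓕⁻ f x * g x) ξ = ∫ η, f η * 𝓕 g (ξ - η) := by
  have hmod : Integrable fun x ↦ 𝐞 (inner ℝ x (-ξ)) • g x := by
    simpa using (fourierIntegral_convergent_iff ξ).2 hg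
  calc 𝓕 (fun x ↦ 𝓕⁻ f x * g x) ξ = ∫ x, 𝓕⁻ f x * 𝐞 (inner ℝ x (-ξ)) • g x := by
        simp only [Real.fourier_eq, inner_neg_right, mul_smul_comm]
    _ = ∫ η, f η * 𝓕 g (ξ - η) := by
        rw [← integral_mul_fourierInv_eq hf hmod]
        simp only [fourierInv_eq_fourier_neg, fourier_fourierChar_smul, sub_neg_eq_add,
          neg_add_eq_sub]

lemma fourier_star (f : V → ℂ) (ξ : V) :
    𝓕 (fun x ↦ (starRingEnd ℂ) (f x)) ξ = (starRingEnd ℂ) (𝓕 f (-ξ)) := by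
  simp_rw [Real.fourier_eq, ← integral_conj, Circle.smul_def, smul_eq_mul, map_mul,
    ← Circle.coe_inv_eq_conj, ← AddChar.map_neg_eq_inv, inner_neg_right, neg_neg]

lemma enorm_fourier_le (f : V → ℂ) (ξ : V) : ‖𝓕 f ξ‖ₑ ≤ ∫⁻ x, ‖f x‖ₑ := by
  rw [Real.fourier_eq]
  exact (enorm_integral_le_lintegral_enorm _).trans_eq (by simp [← ofReal_norm])

lemma enorm_fourierInv_le (f : V → ℂ) (x : V) : ‖𝓕⁻ f x‖ₑ ≤ ∫⁻ ξ, ‖f ξ‖ₑ := by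
  rw [fourierInv_eq_fourier_neg]
  exact enorm_fourier_le f (-x)

lemma enorm_fourier_mul_star_le (hf : Integrable f) (hfc : Continuous f)
    (hf' : Integrable (𝓕 f)) (hg : Integrable g) (ξ : V) :
    ‖𝓕 (fun x ↦ f x * (starRingEnd ℂ) (g x)) ξ‖ₑ ≤ ∫⁻ η, ‖𝓕 f η‖ₑ * ‖𝓕 g (η - ξ)‖ₑ := by
  have hconj : Integrable fun x ↦ (starRingEnd ℂ) (g x) :=
    Complex.conjCLE.toContinuousLinearMap.integrable_comp hg
  have hprod := fourier_fourierInv_mul hf' hconj ξ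
  rw [hfc.fourierInv_fourier_eq hf hf'] at hprod
  rw [hprod]
  refine (enorm_integral_le_lintegral_enorm _).trans_eq ?_
  simp [fourier_star, enorm_mul]

end FourierTransform

section GaussianMixtures

lemma integral_toReal_lintegral_mul {X Y : Type*} [MeasurableSpace X] [MeasurableSpace Y]
    {μ : Measure X} {ν : Measure Y} [SFinite μ] [SFinite ν] {k : X → Y → ℝ} {G : X → ℂ}
    (hk : Measurable k.uncurry) (hk0 : ∀ᵐ y ∂ν, ∀ x, 0 ≤ k x y) (hG : AEStronglyMeasurable G μ)
    (hfin : ∫⁻ x, (∫⁻ y, ENNReal.ofReal (k x y) ∂ν) * ‖G x‖ₑ ∂μ < ∞) :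
    ∫ x, ((∫⁻ y, ENNReal.ofReal (k x y) ∂ν).toReal : ℂ) * G x ∂μ =
      ∫ y, ∫ x, (k x y : ℂ) * G x ∂μ ∂ν := by
  have hint : Integrable (fun z : X × Y ↦ (k z.1 z.2 : ℂ) * G z.1) (μ.prod ν) := by
    have hmeas : AEStronglyMeasurable (fun z : X × Y ↦ (k z.1 z.2 : ℂ) * G z.1) (μ.prod ν) :=
      (Complex.measurable_ofReal.comp hk).aestronglyMeasurable.mul hG.comp_fst
    refine ⟨hmeas, ?_⟩
    rw [HasFiniteIntegral, lintegral_prod _ hmeas.enorm]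
    refine (lintegral_congr fun x ↦ ?_).trans_lt hfin
    rw [← lintegral_mul_const _ (by fun_prop)]
    refine lintegral_congr_ae (hk0.mono fun y hy ↦ ?_)
    simp only [enorm_mul, ← ofReal_norm (k x y : ℂ), Complex.norm_of_nonneg (hy x)]
  rw [← integral_integral_swap hint]
  refine integral_congr_ae (.of_forall fun x ↦ ?_)
  simp only
  rw [integral_mul_const, integral_complex_ofReal, integral_eq_lintegral_of_nonneg_ae
    (hk0.mono fun y hy ↦ hy x) (by fun_prop)]

variable {V : Type*} [NormedAddCommGroup V] [InnerProductSpace ℝ V] [FiniteDimensional ℝ V]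
  [MeasurableSpace V] [BorelSpace V] {f : V → ℂ}

lemma integral_exp_neg_mul_sq_norm_mul_comp_sub {b : ℝ} (hb : 0 < b) (hf : Integrable f)
    (hfc : Continuous f) (hf' : Integrable (𝓕 f)) (x : V) :
    ∫ y, (rexp (-(b * ‖y‖ ^ 2)) : ℂ) * f (x - y) =
      ∫ ξ, (gaussianHat b ξ : ℂ) * 𝐞 (inner ℝ ξ x) • 𝓕 f ξ := by
  have hmod : Integrable fun ξ ↦ 𝐞 (inner ℝ ξ x) • 𝓕 f ξ := by
    simpa using (fourierIntegral_convergent_iff (-x)).2 hf'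
  have htrans (y : V) : f (x - y) = 𝓕 (fun ξ ↦ 𝐞 (inner ℝ ξ x) • 𝓕 f ξ) y := by
    rw [fourier_fourierChar_smul, ← neg_sub x y, ← fourierInv_eq_fourier_neg,
      hfc.fourierInv_fourier_eq hf hf']
  simp_rw [htrans]
  rw [integral_mul_fourier_eq (integrable_exp_neg_mul_sq_norm hb) hmod]
  simp_rw [fourier_exp_neg_mul_sq_norm hb]

lemma integral_laplace_mul_comp_sub {ν : Measure ℝ} [SFinite ν] (hν : ∀ᵐ b ∂ν, 0 < b)
    (hf : Integrable f) (hfc : Continuous f) (hf' : Integrable (𝓕 f)) {x : V}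
    (hfin : ∫⁻ y, laplace ν (‖y‖ ^ 2) * ‖f (x - y)‖ₑ < ∞)
    (hfin' : ∫⁻ ξ : V, (∫⁻ b, ENNReal.ofReal (gaussianHat b ξ) ∂ν) * ‖𝓕 f ξ‖ₑ < ∞) :
    ∫ y, ((laplace ν (‖y‖ ^ 2)).toReal : ℂ) * f (x - y) =
      𝓕⁻ (fun ξ ↦ ((∫⁻ b, ENNReal.ofReal (gaussianHat b ξ) ∂ν).toReal : ℂ) * 𝓕 f ξ) x := by
  have hmod : AEStronglyMeasurable (fun ξ ↦ 𝐞 (inner ℝ ξ x) • 𝓕 f ξ) := by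
    simpa using ((fourierIntegral_convergent_iff (-x)).2 hf').aestronglyMeasurable
  calc ∫ y, ((laplace ν (‖y‖ ^ 2)).toReal : ℂ) * f (x - y)
      = ∫ b, ∫ y, (rexp (-(b * ‖y‖ ^ 2)) : ℂ) * f (x - y) ∂volume ∂ν :=
        integral_toReal_lintegral_mul (by unfold Function.uncurry; fun_prop)
          (.of_forall fun b y ↦ exp_nonneg _) (by fun_prop) hfin
    _ = ∫ b, ∫ ξ, (gaussianHat b ξ : ℂ) * 𝐞 (inner ℝ ξ x) • 𝓕 f ξ ∂volume ∂ν :=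
        integral_congr_ae (hν.mono fun b hb ↦
          integral_exp_neg_mul_sq_norm_mul_comp_sub hb hf hfc hf' x)
    _ = ∫ ξ, ((∫⁻ b, ENNReal.ofReal (gaussianHat b ξ) ∂ν).toReal : ℂ) *
          𝐞 (inner ℝ ξ x) • 𝓕 f ξ :=
        (integral_toReal_lintegral_mul (by unfold Function.uncurry gaussianHat; fun_prop)
          (hν.mono fun b hb ξ ↦ by unfold gaussianHat; positivity) hmod
          (by simpa [← ofReal_norm] using hfin')).symm
    _ = _ := by simp only [fourierInv_eq, mul_smul_comm]

end GaussianMixtures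

section YoungInequality

lemma lintegral_mul_rpow_le {α : Type*} [MeasurableSpace α] {μ : Measure α} {f g : α → ℝ≥0∞}
    (hf : AEMeasurable f μ) (hg : AEMeasurable g μ) {s : ℝ} (hs : 1 ≤ s) :
    (∫⁻ x, f x * g x ∂μ) ^ s ≤ (∫⁻ x, f x ∂μ) ^ (s - 1) * ∫⁻ x, f x * g x ^ s ∂μ := by
  have hs0 : 0 < s := by linarith
  have hs' : 0 ≤ 1 - s⁻¹ := sub_nonneg.2 (inv_le_one_of_one_le₀ hs)
  have hsplit (x : α) : f x * g x = f x ^ (1 - s⁻¹) * (f x * g x ^ s) ^ s⁻¹ := by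
    rw [ENNReal.mul_rpow_of_nonneg _ _ (by positivity), ENNReal.rpow_rpow_inv hs0.ne', ← mul_assoc,
      ← ENNReal.rpow_add_of_nonneg _ _ hs' (by positivity), sub_add_cancel, ENNReal.rpow_one]
  calc (∫⁻ x, f x * g x ∂μ) ^ s
      ≤ ((∫⁻ x, f x ∂μ) ^ (1 - s⁻¹) * (∫⁻ x, f x * g x ^ s ∂μ) ^ s⁻¹) ^ s := by
        gcongr
        exact (lintegral_congr hsplit).trans_le <| ENNReal.lintegral_mul_norm_pow_le hf
          (hf.mul (hg.pow_const s)) hs' (by positivity) (by ring)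
    _ = (∫⁻ x, f x ∂μ) ^ (s - 1) * ∫⁻ x, f x * g x ^ s ∂μ := by
        rw [ENNReal.mul_rpow_of_nonneg _ _ hs0.le, ← ENNReal.rpow_mul,
          ENNReal.rpow_inv_rpow hs0.ne', sub_mul, one_mul, inv_mul_cancel₀ hs0.ne']

lemma lintegral_rpow_mul_rpow_mul_rpow_le {α : Type*} [MeasurableSpace α] {μ : Measure α}
    {f g h : α → ℝ≥0∞} (hf : AEMeasurable f μ) (hg : AEMeasurable g μ) (hh : AEMeasurable h μ)
    {p q r : ℝ} (hp : 0 ≤ p) (hq : 0 ≤ q) (hr : 0 ≤ r) (hpqr : p + q + r = 1) :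
    ∫⁻ x, f x ^ p * g x ^ q * h x ^ r ∂μ ≤
      (∫⁻ x, f x ∂μ) ^ p * (∫⁻ x, g x ∂μ) ^ q * (∫⁻ x, h x ∂μ) ^ r := by
  simpa [Fin.prod_univ_three] using
    ENNReal.lintegral_prod_norm_pow_le (μ := μ) Finset.univ (f := ![f, g, h]) (p := ![p, q, r])
      (by simp [Fin.forall_fin_succ, hf, hg, hh]) (by simpa [Fin.sum_univ_three] using hpqr)
      (by simp [Fin.forall_fin_succ, hp, hq, hr])

variable {G : Type*} [MeasurableSpace G] [AddCommGroup G] [MeasurableAdd₂ G] [MeasurableNeg G]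
  {μ : Measure G} [μ.IsAddLeftInvariant] {f g h : G → ℝ≥0∞}

lemma measurePreserving_neg_add [μ.IsNegInvariant] (x : G) :
    MeasurePreserving (fun y : G ↦ -y + x) μ μ := by
  simpa only [neg_add_eq_sub] using μ.measurePreserving_sub_left x

lemma lconvolution_le_mul_essSup [μ.IsNegInvariant] (hf : AEMeasurable f μ) (x : G) :
    (f ⋆ₗ[μ] g) x ≤ (∫⁻ y, f y ∂μ) * essSup g μ := by
  rw [lconvolution_def, ← lintegral_mul_const'' _ hf]
  refine lintegral_mono_ae ?_
  filter_upwards [(measurePreserving_neg_add x).quasiMeasurePreserving.ae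
    (ENNReal.ae_le_essSup g)] with y hy
  gcongr

variable [SFinite μ]

lemma lintegral_lconvolution (hf : AEMeasurable f μ) (hg : AEMeasurable g μ) :
    ∫⁻ x, (f ⋆ₗ[μ] g) x ∂μ = (∫⁻ x, f x ∂μ) * ∫⁻ x, g x ∂μ := by
  simp only [lconvolution_def]
  rw [lintegral_lintegral_swap (by fun_prop), ← lintegral_mul_const'' _ hf]
  refine lintegral_congr fun y ↦ ?_
  rw [lintegral_const_mul'' _ (by fun_prop), lintegral_add_left_eq_self]

lemma eLpNorm_lconvolution_le [μ.IsNegInvariant] (hf : AEMeasurable f μ) (hg : AEMeasurable g μ)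
    {p : ℝ≥0∞} (hp : 1 ≤ p) :
    eLpNorm (f ⋆ₗ[μ] g) p μ ≤ (∫⁻ x, f x ∂μ) * eLpNorm g p μ := by
  rcases eq_or_ne p ∞ with rfl | hp'
  · simp only [eLpNorm_exponent_top, eLpNormEssSup, enorm_eq_self]
    exact essSup_le_of_ae_le _ (.of_forall fun x ↦ lconvolution_le_mul_essSup hf x)
  have hp0 : p ≠ 0 := (zero_lt_one.trans_le hp).ne'
  have hs : 1 ≤ p.toReal := by simpa using ENNReal.toReal_mono hp' hp
  have hs0 : 0 < p.toReal := by linarith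
  simp only [eLpNorm_eq_lintegral_rpow_enorm_toReal hp0 hp', enorm_eq_self]
  calc (∫⁻ x, (f ⋆ₗ[μ] g) x ^ p.toReal ∂μ) ^ (1 / p.toReal)
      ≤ (∫⁻ x, (∫⁻ y, f y ∂μ) ^ (p.toReal - 1) *
          (f ⋆ₗ[μ] fun y ↦ g y ^ p.toReal) x ∂μ) ^ (1 / p.toReal) := by
        gcongr with x
        exact lintegral_mul_rpow_le hf
          (hg.comp_quasiMeasurePreserving (measurePreserving_neg_add x).quasiMeasurePreserving) hs
    _ = ((∫⁻ x, f x ∂μ) ^ p.toReal * ∫⁻ x, g x ^ p.toReal ∂μ) ^ (1 / p.toReal) := by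
        rw [lintegral_const_mul'' _ (by fun_prop), lintegral_lconvolution hf (by fun_prop),
          ← mul_assoc]
        nth_rw 2 [← ENNReal.rpow_one (∫⁻ x, f x ∂μ)]
        rw [← ENNReal.rpow_add_of_nonneg _ _ (by linarith) zero_le_one, sub_add_cancel]
    _ = (∫⁻ x, f x ∂μ) * (∫⁻ x, g x ^ p.toReal ∂μ) ^ (1 / p.toReal) := by
        rw [ENNReal.mul_rpow_of_nonneg _ _ (by positivity), one_div,
          ENNReal.rpow_rpow_inv hs0.ne']

lemma lintegral_prod_mul_comp_sub (hf : Measurable f) (hg : Measurable g) :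
    ∫⁻ z : G × G, f z.1 * g (z.2 - z.1) ∂μ.prod μ = (∫⁻ x, f x ∂μ) * ∫⁻ x, g x ∂μ := by
  rw [lintegral_prod _ (by fun_prop), ← lintegral_mul_const _ hf]
  refine lintegral_congr fun x ↦ ?_
  simp only [sub_eq_add_neg]
  rw [lintegral_const_mul _ (by fun_prop), lintegral_add_right_eq_self]

lemma lintegral_prod_mul_comp_sub' [μ.IsNegInvariant] (hf : Measurable f) (hg : Measurable g) :
    ∫⁻ z : G × G, f z.2 * g (z.2 - z.1) ∂μ.prod μ = (∫⁻ x, f x ∂μ) * ∫⁻ x, g x ∂μ := by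
  rw [lintegral_prod_symm _ (by fun_prop), ← lintegral_mul_const _ hf]
  refine lintegral_congr fun y ↦ ?_
  simp only
  rw [lintegral_const_mul _ (by fun_prop), lintegral_sub_left_eq_self]

lemma lintegral_lintegral_rpow_mul_comp_sub_le [μ.IsNegInvariant] (hf : Measurable f)
    (hg : Measurable g) (hh : Measurable h) {α β γ : ℝ} (hα : α ≤ 1) (hβ : β ≤ 1) (hγ : γ ≤ 1)
    (hsum : α + β + γ = 2) :
    ∫⁻ x, ∫⁻ y, f x ^ α * g y ^ β * h (y - x) ^ γ ∂μ ∂μ ≤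
      (∫⁻ x, f x ∂μ) ^ α * (∫⁻ x, g x ∂μ) ^ β * (∫⁻ x, h x ∂μ) ^ γ := by
  have hα0 := sub_nonneg.2 hα
  have hβ0 := sub_nonneg.2 hβ
  have hγ0 := sub_nonneg.2 hγ
  have hpair (a b c : ℝ≥0∞) : a ^ α * b ^ β * c ^ γ =
      (a * b) ^ (1 - γ) * (a * c) ^ (1 - β) * (b * c) ^ (1 - α) := by
    have ha : a ^ α = a ^ (1 - γ) * a ^ (1 - β) := by
      rw [← ENNReal.rpow_add_of_nonneg _ _ hγ0 hβ0, show 1 - γ + (1 - β) = α by linarith]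
    have hb : b ^ β = b ^ (1 - γ) * b ^ (1 - α) := by
      rw [← ENNReal.rpow_add_of_nonneg _ _ hγ0 hα0, show 1 - γ + (1 - α) = β by linarith]
    have hc : c ^ γ = c ^ (1 - β) * c ^ (1 - α) := by
      rw [← ENNReal.rpow_add_of_nonneg _ _ hβ0 hα0, show 1 - β + (1 - α) = γ by linarith]
    simp only [ENNReal.mul_rpow_of_nonneg _ _ hα0, ENNReal.mul_rpow_of_nonneg _ _ hβ0,
      ENNReal.mul_rpow_of_nonneg _ _ hγ0, ha, hb, hc]
    ring
  calc ∫⁻ x, ∫⁻ y, f x ^ α * g y ^ β * h (y - x) ^ γ ∂μ ∂μ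
      = ∫⁻ z, (f z.1 * g z.2) ^ (1 - γ) * (f z.1 * h (z.2 - z.1)) ^ (1 - β) *
          (g z.2 * h (z.2 - z.1)) ^ (1 - α) ∂μ.prod μ := by
        simp_rw [hpair]
        rw [lintegral_prod _ (by fun_prop)]
    _ ≤ (∫⁻ z, f z.1 * g z.2 ∂μ.prod μ) ^ (1 - γ) *
          (∫⁻ z, f z.1 * h (z.2 - z.1) ∂μ.prod μ) ^ (1 - β) *
          (∫⁻ z, g z.2 * h (z.2 - z.1) ∂μ.prod μ) ^ (1 - α) :=
        lintegral_rpow_mul_rpow_mul_rpow_le (by fun_prop) (by fun_prop) (by fun_prop) hγ0 hβ0 hα0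
          (by linarith)
    _ = (∫⁻ x, f x ∂μ) ^ α * (∫⁻ x, g x ∂μ) ^ β * (∫⁻ x, h x ∂μ) ^ γ := by
        rw [lintegral_prod_mul hf.aemeasurable hg.aemeasurable, lintegral_prod_mul_comp_sub hf hh,
          lintegral_prod_mul_comp_sub' hg hh, hpair]

end YoungInequality

section PowerWeights

variable {V : Type*} [NormedAddCommGroup V] {s : ℝ}

open Module (finrank)

lemma norm_rpow_neg_le (hs : 0 ≤ s) (x : V) :
    ‖x‖ ^ (-s) ≤
      (Metric.ball 0 1).indicator (fun x ↦ ‖x‖ ^ (-s)) x + 2 ^ s * (1 + ‖x‖) ^ (-s) := by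
  by_cases hx : x ∈ Metric.ball 0 1
  · rw [indicator_of_mem hx]
    exact le_add_of_nonneg_right (by positivity)
  have hx1 : 1 ≤ ‖x‖ := by simpa using hx
  calc ‖x‖ ^ (-s) = 2 ^ s * (2 * ‖x‖) ^ (-s) := by
        rw [mul_rpow zero_le_two (norm_nonneg x), ← mul_assoc, ← rpow_add zero_lt_two,
          add_neg_cancel, rpow_zero, one_mul]
    _ ≤ 2 ^ s * (1 + ‖x‖) ^ (-s) := by
        gcongr 2 ^ s * ?_
        exact rpow_le_rpow_of_nonpos (by positivity) (by linarith) (by linarith)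
    _ = _ := by rw [indicator_of_notMem hx, zero_add]

variable [NormedSpace ℝ V] [FiniteDimensional ℝ V] [MeasurableSpace V] [BorelSpace V]
  (μ : Measure V) [μ.IsAddHaarMeasure]

lemma integrableOn_ball_norm_rpow_neg [Nontrivial V] (hs : s < finrank ℝ V) :
    IntegrableOn (fun x : V ↦ ‖x‖ ^ (-s)) (Metric.ball 0 1) μ := by
  refine (integrableOn_fun_norm_addHaar μ (f := fun r ↦ r ^ (-s))).2 ?_
  have hint : IntegrableOn (fun r : ℝ ↦ r ^ (finrank ℝ V - 1 - s)) (Ioo 0 1) :=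
    intervalIntegral.integrableOn_Ioo_rpow_iff zero_lt_one |>.2 (by linarith)
  refine hint.congr_fun (fun r hr ↦ ?_) measurableSet_Ioo
  have hn : 1 ≤ finrank ℝ V := Module.finrank_pos
  simp only [smul_eq_mul]
  rw [← rpow_natCast, ← rpow_add hr.1, Nat.cast_sub hn, Nat.cast_one, sub_eq_add_neg _ s]

lemma exists_lintegral_norm_rpow_neg_mul_le (hs : 0 ≤ s) (hsV : s < finrank ℝ V) :
    ∃ C : ℝ≥0, ∀ (u : V → ℝ≥0∞) (M : ℝ≥0∞), (∀ x, u x ≤ M) →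
      ∫⁻ x, ENNReal.ofReal (‖x‖ ^ (-s)) * u x ∂μ ≤
        C * (M + ∫⁻ x, ENNReal.ofReal ((1 + ‖x‖) ^ (-s)) * u x ∂μ) := by
  have : Nontrivial V := Module.nontrivial_of_finrank_pos (R := ℝ)
    (Nat.cast_pos.1 (hs.trans_lt hsV))
  let I := (Metric.ball (0 : V) 1).indicator fun x ↦ ‖x‖ ^ (-s)
  have hI : Measurable I := Measurable.indicator (by fun_prop) measurableSet_ball
  have hI0 (x : V) : 0 ≤ I x := indicator_nonneg (fun x _ ↦ by positivity) x
  have hIfin : ∫⁻ x, ENNReal.ofReal (I x) ∂μ < ∞ :=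
    ((integrable_indicator_iff measurableSet_ball).2
      (integrableOn_ball_norm_rpow_neg μ hsV)).lintegral_lt_top
  lift ∫⁻ x, ENNReal.ofReal (I x) ∂μ to ℝ≥0 using hIfin.ne with J hJ
  refine ⟨J + Real.toNNReal (2 ^ s), fun u M hu ↦ ?_⟩
  calc ∫⁻ x, ENNReal.ofReal (‖x‖ ^ (-s)) * u x ∂μ
      ≤ ∫⁻ x, ENNReal.ofReal (I x) * M +
          ENNReal.ofReal (2 ^ s) * (ENNReal.ofReal ((1 + ‖x‖) ^ (-s)) * u x) ∂μ := by
        refine lintegral_mono fun x ↦ ?_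
        grw [norm_rpow_neg_le hs x, ENNReal.ofReal_add (hI0 x) (by positivity), add_mul,
          ENNReal.ofReal_mul (by positivity), mul_assoc]
        gcongr
        exact hu x
    _ = J * M + ENNReal.ofReal (2 ^ s) * ∫⁻ x, ENNReal.ofReal ((1 + ‖x‖) ^ (-s)) * u x ∂μ := by
        rw [lintegral_add_left (by fun_prop), lintegral_mul_const _ (by fun_prop), hJ,
          lintegral_const_mul' _ _ ENNReal.ofReal_ne_top]
    _ ≤ ↑(J + Real.toNNReal (2 ^ s)) *
          (M + ∫⁻ x, ENNReal.ofReal ((1 + ‖x‖) ^ (-s)) * u x ∂μ) := by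
        rw [mul_add]
        gcongr
        exacts [le_self_add, ENNReal.coe_le_coe.2 le_add_self]

lemma lintegral_norm_rpow_neg_mul_lt_top (hs : 0 ≤ s) (hsV : s < finrank ℝ V)
    {u : V → ℝ≥0∞} {M : ℝ≥0∞} (hM : M ≠ ∞) (huM : ∀ x, u x ≤ M) (hu : ∫⁻ x, u x ∂μ ≠ ∞) :
    ∫⁻ x, ENNReal.ofReal (‖x‖ ^ (-s)) * u x ∂μ < ∞ := by
  obtain ⟨C, hC⟩ := exists_lintegral_norm_rpow_neg_mul_le μ hs hsV
  have hle (x : V) : ENNReal.ofReal ((1 + ‖x‖) ^ (-s)) * u x ≤ u x :=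
    mul_le_of_le_one_left' <| ENNReal.ofReal_le_one.2 <|
      rpow_le_one_of_one_le_of_nonpos (by simp) (neg_nonpos.2 hs)
  calc ∫⁻ x, ENNReal.ofReal (‖x‖ ^ (-s)) * u x ∂μ
      ≤ C * (M + ∫⁻ x, ENNReal.ofReal ((1 + ‖x‖) ^ (-s)) * u x ∂μ) := hC u M huM
    _ ≤ C * (M + ∫⁻ x, u x ∂μ) := by gcongr with x; exact hle x
    _ < ∞ := ENNReal.mul_lt_top ENNReal.coe_lt_top
        (ENNReal.add_lt_top.2 ⟨hM.lt_top, hu.lt_top⟩)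

lemma exists_lintegral_one_add_norm_rpow_neg_mul_le {q : ℝ} (hq1 : 1 ≤ q) (hq2 : q ≤ 2)
    (hs : finrank ℝ V * (2 - 2 / q) < s) :
    ∃ C : ℝ≥0, ∀ g h : V → ℝ≥0∞, Measurable g → Measurable h →
      ∫⁻ x, ENNReal.ofReal ((1 + ‖x‖) ^ (-s)) * ∫⁻ y, g y * h (y - x) ∂μ ∂μ ≤
        C * ((∫⁻ y, g y ^ q ∂μ) ^ (1 / q) * (∫⁻ y, h y ^ q ∂μ) ^ (1 / q)) := by
  have hq0 : 0 < q := by linarith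
  let α := 2 - 2 / q
  have hα0 : 0 ≤ α := by
    have : 2 / q ≤ 2 := (div_le_iff₀ hq0).2 (by linarith)
    linarith
  have hα1 : α ≤ 1 := by
    have : 1 ≤ 2 / q := (one_le_div hq0).2 hq2
    linarith
  -- The exponent `N` exceeds the dimension, while `α * N ≤ s`.
  let N := finrank ℝ V + (s - finrank ℝ V * α)
  let W : V → ℝ≥0∞ := fun x ↦ ENNReal.ofReal ((1 + ‖x‖) ^ (-N))
  have hW : ∫⁻ x, W x ∂μ < ∞ := (integrable_one_add_norm (by linarith)).lintegral_lt_top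
  have hle (x : V) : ENNReal.ofReal ((1 + ‖x‖) ^ (-s)) ≤ W x ^ α := by
    rw [ENNReal.ofReal_rpow_of_nonneg (by positivity) hα0, ← rpow_mul (by positivity)]
    gcongr
    · simp
    · nlinarith
  have hroot (a : ℝ≥0∞) : (a ^ q) ^ (1 / q) = a := by rw [one_div, ENNReal.rpow_rpow_inv hq0.ne']
  refine ⟨((∫⁻ x, W x ∂μ) ^ α).toNNReal, fun g h hg hh ↦ ?_⟩
  rw [ENNReal.coe_toNNReal (ENNReal.rpow_ne_top_of_nonneg hα0 hW.ne), ← mul_assoc]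
  calc ∫⁻ x, ENNReal.ofReal ((1 + ‖x‖) ^ (-s)) * ∫⁻ y, g y * h (y - x) ∂μ ∂μ
      ≤ ∫⁻ x, W x ^ α * ∫⁻ y, g y * h (y - x) ∂μ ∂μ := by gcongr with x; exact hle x
    _ = ∫⁻ x, ∫⁻ y, W x ^ α * (g y ^ q) ^ (1 / q) * (h (y - x) ^ q) ^ (1 / q) ∂μ ∂μ := by
        refine lintegral_congr fun x ↦ ?_
        simp_rw [hroot, mul_assoc]
        rw [lintegral_const_mul _ (by fun_prop)]
    _ ≤ (∫⁻ x, W x ∂μ) ^ α * (∫⁻ y, g y ^ q ∂μ) ^ (1 / q) * (∫⁻ y, h y ^ q ∂μ) ^ (1 / q) :=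
        lintegral_lintegral_rpow_mul_comp_sub_le (f := W) (g := fun y ↦ g y ^ q)
          (h := fun y ↦ h y ^ q) (by fun_prop) (by fun_prop) (by fun_prop) hα1
          (div_le_one hq0 |>.2 hq1) (div_le_one hq0 |>.2 hq1) (by ring)

end PowerWeights

section YukawaConvolution

variable {V : Type*} [NormedAddCommGroup V] [InnerProductSpace ℝ V] [FiniteDimensional ℝ V]
  [MeasurableSpace V] [BorelSpace V] {a γ : ℝ}

open Module (finrank)

lemma exists_lintegral_yukawaHat_mul_le (V : Type*) [NormedAddCommGroup V]
    [InnerProductSpace ℝ V] [FiniteDimensional ℝ V] [MeasurableSpace V] [BorelSpace V]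
    (hγ : 0 < γ) (hγV : γ < finrank ℝ V) :
    ∃ C : ℝ≥0, ∀ (a : ℝ) (u : V → ℝ≥0∞), ∫⁻ ξ, yukawaHat a γ ξ * u ξ ≤
      C * ∫⁻ ξ, ENNReal.ofReal (‖ξ‖ ^ (γ - finrank ℝ V)) * u ξ := by
  have : Nontrivial V := Module.finrank_pos_iff.1 (Nat.cast_pos.1 (hγ.trans hγV))
  obtain ⟨C, hC⟩ := exists_yukawaHat_le V hγ hγV
  refine ⟨C, fun a u ↦ ?_⟩
  rw [← lintegral_const_mul' _ _ ENNReal.coe_ne_top]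
  refine lintegral_mono_ae ((Measure.ae_ne volume 0).mono fun ξ hξ ↦ ?_)
  grw [hC a ξ hξ, mul_assoc]

lemma enorm_le_lintegral_enorm_fourier {f : V → ℂ} (hf : Integrable f) (hfc : Continuous f)
    (hf' : Integrable (𝓕 f)) (x : V) : ‖f x‖ₑ ≤ ∫⁻ ξ, ‖𝓕 f ξ‖ₑ := by
  conv_lhs => rw [← hfc.fourierInv_fourier_eq hf hf']
  exact enorm_fourierInv_le _ x

lemma lintegral_yukawaHat_mul_enorm_fourier_lt_top {f : V → ℂ} (hγ : 0 < γ)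
    (hγV : γ < finrank ℝ V) (hf : Integrable f) (hf' : Integrable (𝓕 f)) :
    ∫⁻ ξ, yukawaHat a γ ξ * ‖𝓕 f ξ‖ₑ < ∞ := by
  obtain ⟨C, hC⟩ := exists_lintegral_yukawaHat_mul_le V hγ hγV
  have hfin := lintegral_norm_rpow_neg_mul_lt_top volume (sub_nonneg.2 hγV.le) (sub_lt_self _ hγ)
    hf.2.ne (enorm_fourier_le f) hf'.2.ne
  rw [neg_sub] at hfin
  exact (hC a _).trans_lt (ENNReal.mul_lt_top ENNReal.coe_lt_top hfin)

lemma integrable_yukawaHat_mul_fourier {f : V → ℂ} (hγ : 0 < γ)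
    (hγV : γ < finrank ℝ V) (hf : Integrable f) (hf' : Integrable (𝓕 f)) :
    Integrable fun ξ ↦ ((yukawaHat a γ ξ).toReal : ℂ) * 𝓕 f ξ :=
  ⟨(Complex.measurable_ofReal.comp
      (measurable_yukawaHat a γ).ennreal_toReal).aestronglyMeasurable.mul hf'.1,
    (lintegral_mono fun ξ ↦ enorm_yukawaHat_mul_le a γ ξ (𝓕 f ξ)).trans_lt
      (lintegral_yukawaHat_mul_enorm_fourier_lt_top hγ hγV hf hf')⟩

lemma integral_yukawa_mul_comp_sub {f : V → ℂ} (ha : 0 ≤ a) (hγ : 0 < γ) (hγV : γ < finrank ℝ V)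
    (hf : Integrable f) (hfc : Continuous f) (hf' : Integrable (𝓕 f)) (x : V) :
    ∫ y, ((rexp (-(a * ‖y‖)) * ‖y‖ ^ (-γ) : ℝ) : ℂ) * f (x - y) =
      𝓕⁻ (fun ξ ↦ ((yukawaHat a γ ξ).toReal : ℂ) * 𝓕 f ξ) x := by
  have : Nontrivial V := Module.finrank_pos_iff.1 (Nat.cast_pos.1 (hγ.trans hγV))
  have hkernel : ∀ᵐ y : V, laplace (yukawaMeasure a γ) (‖y‖ ^ 2) =
      ENNReal.ofReal (rexp (-(a * ‖y‖)) * ‖y‖ ^ (-γ)) :=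
    (Measure.ae_ne volume 0).mono fun y hy ↦ laplace_yukawaMeasure ha hγ (norm_pos_iff.2 hy)
  have hfin : ∫⁻ y, laplace (yukawaMeasure a γ) (‖y‖ ^ 2) * ‖f (x - y)‖ₑ < ∞ := by
    refine (lintegral_mono_ae (hkernel.mono fun y hy ↦ ?_)).trans_lt
      (lintegral_norm_rpow_neg_mul_lt_top volume hγ.le hγV hf'.2.ne
        (fun y ↦ enorm_le_lintegral_enorm_fourier hf hfc hf' (x - y)) (hf.comp_sub_left x).2.ne)
    rw [hy]
    gcongr
    exact mul_le_of_le_one_left (by positivity) (exp_le_one_iff.2 (neg_nonpos.2 (by positivity)))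
  calc ∫ y, ((rexp (-(a * ‖y‖)) * ‖y‖ ^ (-γ) : ℝ) : ℂ) * f (x - y)
      = ∫ y, ((laplace (yukawaMeasure a γ) (‖y‖ ^ 2)).toReal : ℂ) * f (x - y) :=
        integral_congr_ae (hkernel.mono fun y hy ↦ by
          simp only [hy]
          rw [ENNReal.toReal_ofReal (by positivity)])
    _ = _ := integral_laplace_mul_comp_sub (ae_pos_yukawaMeasure a γ) hf hfc hf' hfin
        (lintegral_yukawaHat_mul_enorm_fourier_lt_top hγ hγV hf hf')

end YukawaConvolution

section Multiplication

variable {V : Type*} [NormedAddCommGroup V] [InnerProductSpace ℝ V] [FiniteDimensional ℝ V]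
  [MeasurableSpace V] [BorelSpace V] {A h : V → ℂ}

lemma eLpNorm_fourierInv_mul_le (A : V → ℂ) (hh : AEStronglyMeasurable h) (p : ℝ≥0∞) :
    eLpNorm (fun x ↦ 𝓕⁻ A x * h x) p volume ≤ (∫⁻ ξ, ‖A ξ‖ₑ) * eLpNorm h p volume := by
  refine eLpNorm_le_mul_eLpNorm_of_ae_le_mul'' p hh (.of_forall fun x ↦ ?_)
  grw [enorm_mul, enorm_fourierInv_le]

lemma eLpNorm_fourier_fourierInv_mul_le (hA : Integrable A) (hh : Integrable h) {q : ℝ≥0∞}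
    (hq : 1 ≤ q) :
    eLpNorm (𝓕 fun x ↦ 𝓕⁻ A x * h x) q volume ≤
      (∫⁻ ξ, ‖A ξ‖ₑ) * eLpNorm (𝓕 h) q volume := by
  have hh' : Continuous (𝓕 h) := VectorFourier.fourierIntegral_continuous
    Real.continuous_fourierChar continuous_inner hh
  have hle (ξ : V) : ‖𝓕 (fun x ↦ 𝓕⁻ A x * h x) ξ‖ₑ ≤
      ((fun η ↦ ‖A η‖ₑ) ⋆ₗ fun η ↦ ‖𝓕 h η‖ₑ) ξ := by
    rw [fourier_fourierInv_mul hA hh]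
    refine (enorm_integral_le_lintegral_enorm _).trans_eq ?_
    simp [lconvolution_def, enorm_mul, neg_add_eq_sub]
  calc eLpNorm (𝓕 fun x ↦ 𝓕⁻ A x * h x) q volume
      ≤ eLpNorm ((fun η ↦ ‖A η‖ₑ) ⋆ₗ fun η ↦ ‖𝓕 h η‖ₑ) q volume :=
        eLpNorm_mono_enorm hle
    _ ≤ (∫⁻ ξ, ‖A ξ‖ₑ) * eLpNorm (fun η ↦ ‖𝓕 h η‖ₑ) q volume :=
        eLpNorm_lconvolution_le hA.1.enorm hh'.enorm.measurable.aemeasurable hq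
    _ = (∫⁻ ξ, ‖A ξ‖ₑ) * eLpNorm (𝓕 h) q volume := by rw [eLpNorm_enorm]

end Multiplication

section ProductEstimates

open Module (finrank)

lemma exists_schwartzMap_eq_mul_star {V : Type*} [NormedAddCommGroup V] [NormedSpace ℝ V]
    (f g : SchwartzMap V ℂ) :
    ∃ F : SchwartzMap V ℂ, ⇑F = fun x ↦ f x * (starRingEnd ℂ) (g x) := by
  refine ⟨SchwartzMap.pairing (ContinuousLinearMap.mul ℝ ℂ) f
    (SchwartzMap.postcompCLM (𝕜 := ℝ) (Complex.conjCLE : ℂ →L[ℝ] ℂ) g), ?_⟩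
  ext x
  simp [SchwartzMap.pairing_apply_apply]

lemma lintegral_enorm_mul_enorm_le {α : Type*} [MeasurableSpace α] {μ : Measure α} {f g : α → ℂ}
    (hf : AEStronglyMeasurable f μ) (hg : AEStronglyMeasurable g μ) :
    ∫⁻ x, ‖f x‖ₑ * ‖g x‖ₑ ∂μ ≤ eLpNorm f 2 μ * eLpNorm g 2 μ := by
  simpa [eLpNorm_eq_lintegral_rpow_enorm_toReal] using
    ENNReal.lintegral_mul_le_Lp_mul_Lq μ Real.HolderConjugate.two_two hf.enorm hg.enorm

lemma enorm_fourier_mul_star_le_eLpNorm_two {V : Type*} [NormedAddCommGroup V]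
    [InnerProductSpace ℝ V] [FiniteDimensional ℝ V] [MeasurableSpace V] [BorelSpace V] {f g : V → ℂ}
    (hf : AEStronglyMeasurable f volume) (hg : AEStronglyMeasurable g volume) (ξ : V) :
    ‖𝓕 (fun x ↦ f x * (starRingEnd ℂ) (g x)) ξ‖ₑ ≤ eLpNorm f 2 volume * eLpNorm g 2 volume := by
  refine (enorm_fourier_le _ ξ).trans ?_
  simp only [enorm_mul, RCLike.enorm_conj]
  exact lintegral_enorm_mul_enorm_le hf hg

lemma exponent_bounds_of_lt_mul_two_div_sub_one {n γ : ℝ} {q : ℝ≥0∞} (hn : 0 ≤ n) (hq : 1 ≤ q)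
    (hγ : 0 < γ) (hγq : γ < n * (2 / q.toReal - 1)) :
    q ≠ ∞ ∧ 1 ≤ q.toReal ∧ q.toReal ≤ 2 ∧ γ < n := by
  have hpos : 0 < 2 / q.toReal - 1 := pos_of_mul_pos_right (hγ.trans hγq) hn
  have hq_top : q ≠ ∞ := by
    rintro rfl
    norm_num at hpos
  have hq1 : 1 ≤ q.toReal := by simpa using ENNReal.toReal_mono hq_top hq
  have hq2 : q.toReal < 2 := by rwa [sub_pos, one_lt_div (by linarith)] at hpos
  have hle : 2 / q.toReal ≤ 2 := div_le_self zero_le_two hq1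
  exact ⟨hq_top, hq1, hq2.le, hγq.trans_le (mul_le_of_le_one_right hn (by linarith))⟩

lemma exists_lintegral_norm_rpow_mul_fourier_mul_star_le (V : Type*) [NormedAddCommGroup V]
    [InnerProductSpace ℝ V] [FiniteDimensional ℝ V] [MeasurableSpace V] [BorelSpace V]
    {q : ℝ≥0∞} (hq : 1 ≤ q) {γ : ℝ} (hγ : 0 < γ) (hγq : γ < finrank ℝ V * (2 / q.toReal - 1)) :
    ∃ C : ℝ≥0, ∀ f g : SchwartzMap V ℂ,
      ∫⁻ ξ, ENNReal.ofReal (‖ξ‖ ^ (γ - finrank ℝ V)) *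
          ‖𝓕 (fun x ↦ f x * (starRingEnd ℂ) (g x)) ξ‖ₑ ≤
        C * (eLpNorm f 2 volume * eLpNorm g 2 volume +
          eLpNorm (𝓕 (f : V → ℂ)) q volume * eLpNorm (𝓕 (g : V → ℂ)) q volume) := by
  obtain ⟨hq_top, hq1, hq2, hγV⟩ :=
    exponent_bounds_of_lt_mul_two_div_sub_one (Nat.cast_nonneg _) hq hγ hγq
  obtain ⟨C, hC⟩ := exists_lintegral_norm_rpow_neg_mul_le (volume : Measure V)
    (sub_nonneg.2 hγV.le) (sub_lt_self _ hγ)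
  obtain ⟨D, hD⟩ := exists_lintegral_one_add_norm_rpow_neg_mul_le (volume : Measure V)
    (s := finrank ℝ V - γ) hq1 hq2 (by linarith)
  refine ⟨C * (1 + D), fun f g ↦ ?_⟩
  rw [neg_sub] at hC hD
  let u : V → ℝ≥0∞ := fun ξ ↦ ‖𝓕 (fun x ↦ f x * (starRingEnd ℂ) (g x)) ξ‖ₑ
  have hq0 : q ≠ 0 := (zero_lt_one.trans_le hq).ne'
  have hu (ξ : V) : u ξ ≤ eLpNorm f 2 volume * eLpNorm g 2 volume :=
    enorm_fourier_mul_star_le_eLpNorm_two f.continuous.aestronglyMeasurable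
      g.continuous.aestronglyMeasurable ξ
  have hfar : ∫⁻ ξ, ENNReal.ofReal ((1 + ‖ξ‖) ^ (γ - finrank ℝ V)) * u ξ ≤
      D * (eLpNorm (𝓕 (f : V → ℂ)) q volume * eLpNorm (𝓕 (g : V → ℂ)) q volume) := by
    rw [eLpNorm_eq_lintegral_rpow_enorm_toReal hq0 hq_top,
      eLpNorm_eq_lintegral_rpow_enorm_toReal hq0 hq_top]
    refine le_trans ?_ (hD _ _ (𝓕 f).continuous.enorm.measurable
      (𝓕 g).continuous.enorm.measurable)
    gcongr with ξ
    exact enorm_fourier_mul_star_le f.integrable f.continuous (𝓕 f).integrable g.integrable ξ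
  calc ∫⁻ ξ, ENNReal.ofReal (‖ξ‖ ^ (γ - finrank ℝ V)) * u ξ
      ≤ C * (eLpNorm f 2 volume * eLpNorm g 2 volume +
          ∫⁻ ξ, ENNReal.ofReal ((1 + ‖ξ‖) ^ (γ - finrank ℝ V)) * u ξ) := hC u _ hu
    _ ≤ C * (1 + D) * (eLpNorm f 2 volume * eLpNorm g 2 volume +
          eLpNorm (𝓕 (f : V → ℂ)) q volume * eLpNorm (𝓕 (g : V → ℂ)) q volume) := by
        grw [hfar, mul_assoc, mul_add (1 + D : ℝ≥0∞)]
        refine mul_le_mul' le_rfl (add_le_add ?_ ?_)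
        · exact le_mul_of_one_le_left' le_self_add
        · gcongr
          exact le_add_self
    _ = _ := by push_cast; rfl

lemma exists_lintegral_yukawaHat_mul_fourier_mul_star_le (V : Type*) [NormedAddCommGroup V]
    [InnerProductSpace ℝ V] [FiniteDimensional ℝ V] [MeasurableSpace V] [BorelSpace V]
    {q : ℝ≥0∞} (hq : 1 ≤ q) {γ : ℝ} (hγ : 0 < γ) (hγq : γ < finrank ℝ V * (2 / q.toReal - 1)) :
    ∃ C : ℝ≥0, ∀ (a : ℝ) (f g : SchwartzMap V ℂ),
      ∫⁻ ξ, yukawaHat a γ ξ * ‖𝓕 (fun x ↦ f x * (starRingEnd ℂ) (g x)) ξ‖ₑ ≤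
        C * (eLpNorm f 2 volume * eLpNorm g 2 volume +
          eLpNorm (𝓕 (f : V → ℂ)) q volume * eLpNorm (𝓕 (g : V → ℂ)) q volume) := by
  obtain ⟨-, -, -, hγV⟩ :=
    exponent_bounds_of_lt_mul_two_div_sub_one (Nat.cast_nonneg _) hq hγ hγq
  obtain ⟨C, hC⟩ := exists_lintegral_yukawaHat_mul_le V hγ hγV
  obtain ⟨D, hD⟩ := exists_lintegral_norm_rpow_mul_fourier_mul_star_le V hq hγ hγq
  refine ⟨C * D, fun a f g ↦ (hC a _).trans ?_⟩
  grw [hD f g, ENNReal.coe_mul, mul_assoc]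

end ProductEstimates

section Hartree

variable {d : ℕ} {γ : ℝ} {q : ℝ≥0∞}

lemma Xnorm_fourierInv_mul_le {A h : EuclideanSpace ℝ (Fin d) → ℂ} (hA : Integrable A)
    (hh : Integrable h) (hq : 1 ≤ q) :
    Xnorm d q (fun x ↦ 𝓕⁻ A x * h x) ≤ (∫⁻ ξ, ‖A ξ‖ₑ) * Xnorm d q h := by
  unfold Xnorm
  refine max_le ?_ ?_
  · grw [eLpNorm_fourierInv_mul_le A hh.1 2, ← le_max_left]
  · grw [eLpNorm_fourier_fourierInv_mul_le hA hh hq, ← le_max_right]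

lemma eLpNorm_mul_add_eLpNorm_fourier_mul_le (f g : EuclideanSpace ℝ (Fin d) → ℂ) (q : ℝ≥0∞) :
    eLpNorm f 2 volume * eLpNorm g 2 volume + eLpNorm (𝓕 f) q volume * eLpNorm (𝓕 g) q volume ≤
      2 * (Xnorm d q f * Xnorm d q g) := by
  rw [two_mul]
  unfold Xnorm
  gcongr
  exacts [le_max_left _ _, le_max_left _ _, le_max_right _ _, le_max_right _ _]

lemma hartreeOp_eq_fourierInv_mul {a : ℝ} (ha : 0 ≤ a) (hγ : 0 < γ) (hγd : γ < d)
    {f g F : EuclideanSpace ℝ (Fin d) → ℂ} (hF : F = fun x ↦ f x * (starRingEnd ℂ) (g x))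
    (hFi : Integrable F) (hFc : Continuous F) (hFi' : Integrable (𝓕 F))
    (h : EuclideanSpace ℝ (Fin d) → ℂ) :
    hartreeOp d a γ f g h =
      fun x ↦ 𝓕⁻ (fun ξ ↦ ((yukawaHat a γ ξ).toReal : ℂ) * 𝓕 F ξ) x * h x := by
  ext x
  rw [← integral_yukawa_mul_comp_sub ha hγ (by simpa using hγd) hFi hFc hFi' x, hF]
  rfl

lemma exists_Xnorm_hartreeOp_le (hq : 1 ≤ q) (hγ : 0 < γ) (hγq : γ < d * (2 / q.toReal - 1)) :
    ∃ C : ℝ≥0, ∀ a : ℝ, 0 ≤ a → ∀ f g h : SchwartzMap (EuclideanSpace ℝ (Fin d)) ℂ,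
      Xnorm d q (hartreeOp d a γ f g h) ≤ C * Xnorm d q f * Xnorm d q g * Xnorm d q h := by
  obtain ⟨-, -, -, hγd⟩ :=
    exponent_bounds_of_lt_mul_two_div_sub_one (Nat.cast_nonneg d) hq hγ hγq
  obtain ⟨C, hC⟩ := exists_lintegral_yukawaHat_mul_fourier_mul_star_le
    (EuclideanSpace ℝ (Fin d)) hq hγ (by simpa using hγq)
  refine ⟨C * 2, fun a ha f g h ↦ ?_⟩
  obtain ⟨F, hF⟩ := exists_schwartzMap_eq_mul_star f g
  have hF' : Integrable (𝓕 ⇑F) := (𝓕 F).integrable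
  let A : EuclideanSpace ℝ (Fin d) → ℂ := fun ξ ↦ ((yukawaHat a γ ξ).toReal : ℂ) * 𝓕 ⇑F ξ
  have hA : Integrable A :=
    integrable_yukawaHat_mul_fourier hγ (by simpa using hγd) F.integrable hF'
  have hA_le : ∫⁻ ξ, ‖A ξ‖ₑ ≤ C * (2 * (Xnorm d q f * Xnorm d q g)) :=
    calc ∫⁻ ξ, ‖A ξ‖ₑ ≤ ∫⁻ ξ, yukawaHat a γ ξ * ‖𝓕 ⇑F ξ‖ₑ :=
          lintegral_mono fun ξ ↦ enorm_yukawaHat_mul_le a γ ξ _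
      _ ≤ C * (2 * (Xnorm d q f * Xnorm d q g)) := by
          grw [hF, hC, eLpNorm_mul_add_eLpNorm_fourier_mul_le]
  calc Xnorm d q (hartreeOp d a γ f g h)
      ≤ (∫⁻ ξ, ‖A ξ‖ₑ) * Xnorm d q h := by
        rw [hartreeOp_eq_fourierInv_mul ha hγ hγd hF F.integrable F.continuous hF' h]
        exact Xnorm_fourierInv_mul_le hA h.integrable hq
    _ ≤ ↑(C * 2) * Xnorm d q f * Xnorm d q g * Xnorm d q h := by
        grw [hA_le]
        push_cast
        simp only [mul_assoc, le_refl]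

end Hartree

lemma toReal_inv_add_toReal_inv (p q : ℝ≥0∞) [p.HolderConjugate q] :
    p.toReal⁻¹ + q.toReal⁻¹ = 1 := by
  have hsum := ENNReal.HolderConjugate.inv_add_inv_eq_one p q
  have hp : p⁻¹ ≠ ∞ := ne_top_of_le_ne_top ENNReal.one_ne_top (hsum ▸ le_self_add)
  have hq : q⁻¹ ≠ ∞ := ne_top_of_le_ne_top ENNReal.one_ne_top (hsum ▸ le_add_self)
  simpa [ENNReal.toReal_add hp hq] using congrArg ENNReal.toReal hsum

end HartreeEstimate

/-- For `2 < p ≤ ∞` and `0 < γ < 2d(1/2 - 1/p)`: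
`‖H_{a,γ}(f₁,f₂,f₃)‖_X ≤ C ‖f₁‖_X ‖f₂‖_X ‖f₃‖_X` on `X = L² ∩ L̂^p` for Schwartz
functions, with `C = C(d,γ,p)` independent of `a ≥ 0`; `1/p + 1/p' = 1`. -/
theorem hartree_X_estimate (d : ℕ) (hd : 1 ≤ d)
    (p p' : ℝ≥0∞) (hp : 2 < p) (hpp' : 1 / p + 1 / p' = 1)
    (γ : ℝ) (hγ0 : 0 < γ) (hγ : γ < 2 * d * (1 / 2 - 1 / p.toReal)) :
    ∃ C : ℝ, 0 < C ∧ ∀ a : ℝ, 0 ≤ a →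
      ∀ f₁ f₂ f₃ : SchwartzMap (EuclideanSpace ℝ (Fin d)) ℂ,
        Xnorm d p' (hartreeOp d a γ (⇑f₁) (⇑f₂) (⇑f₃)) ≤
          ENNReal.ofReal C * Xnorm d p' (⇑f₁) * Xnorm d p' (⇑f₂) *
            Xnorm d p' (⇑f₃) := by
  have hconj : p.HolderConjugate p' := ENNReal.holderConjugate_iff.2 (by simpa using hpp')
  have hdual : 2 * (1 / 2 - 1 / p.toReal) = 2 / p'.toReal - 1 := by
    linear_combination -2 * HartreeEstimate.toReal_inv_add_toReal_inv p p'
  obtain ⟨C, hC⟩ := HartreeEstimate.exists_Xnorm_hartreeOp_le (d := d)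
    (ENNReal.HolderConjugate.one_le p' p) hγ0 (by rwa [← hdual, mul_left_comm, ← mul_assoc])
  refine ⟨C + 1, by positivity, fun a ha f₁ f₂ f₃ ↦ (hC a ha f₁ f₂ f₃).trans ?_⟩
  gcongr
  rw [ENNReal.le_ofReal_iff_toReal_le ENNReal.coe_ne_top (by positivity)]
  simp
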